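/- Let H ∈ (0, 1/2). There exists a positive constant C, depending only on H and independent of T, such that for every T > 0, ∫∫∫_{0<r<s<t<T} min(1, r^(2H−2)) · min(1, (t−r)^(2H−2)) · min(1, (t−s)^(2H−2)) dr ds dt ≤ C. -/

import Mathlib

/-!
With `r`, `u = t - r` and `v = t - s` as coordinates the integrand becomes a product of functions of
one variable each, and the Jacobian is one. All three are positive when `0 < r < s < t`, so the
integral is at most the product of three integrals over the half-line, each finite because its
exponent is less than `-1`.
-/

open MeasureTheory Real Set

section Shear

variable (G : Type*) [AddGroup G] [MeasurableSpace G] [MeasurableAdd₂ G] [MeasurableNeg G]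

/-- The change of variables `(r, s, t) ↦ (r, t - r, t - s)`, which turns an integrand depending on
`r`, `t - r` and `t - s` separately into a product. -/
def differenceShear : G × G × G ≃ᵐ G × G × G where
  toFun p := (p.1, p.2.2 - p.1, p.2.2 - p.2.1)
  invFun q := (q.1, -q.2.2 + (q.2.1 + q.1), q.2.1 + q.1)
  left_inv p := by simp
  right_inv q := by simp [sub_eq_add_neg, add_assoc]
  measurable_toFun := by simp only [Equiv.coe_fn_mk]; fun_prop
  measurable_invFun := by simp only [Equiv.coe_fn_symm_mk]; fun_prop

variable {G}

lemma measurePreserving_differenceShear (ν μ : Measure G) [SFinite ν] [SFinite μ]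
    [μ.IsAddLeftInvariant] [μ.IsNegInvariant] :
    MeasurePreserving (differenceShear G) (ν.prod (μ.prod μ)) (ν.prod (μ.prod μ)) := by
  have sub_right (r : G) : MeasurePreserving (fun t => t - r) μ μ := by
    simpa only [Function.comp_def, neg_sub] using
      (Measure.measurePreserving_neg μ).comp (Measure.measurePreserving_sub_left μ r)
  have shear_fiber (r : G) :
      MeasurePreserving (fun q : G × G => (q.2 - r, q.2 - q.1)) (μ.prod μ) (μ.prod μ) :=
    ((sub_right r).skew_product (g := fun t s => t - s) (by fun_prop)
      (.of_forall fun t => (Measure.measurePreserving_sub_left μ t).map_eq)).comp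
      Measure.measurePreserving_swap
  exact (MeasurePreserving.id ν).skew_product (g := fun r (q : G × G) => (q.2 - r, q.2 - q.1))
    (by fun_prop) (.of_forall fun r => (shear_fiber r).map_eq)

variable {𝕜 : Type*} [RCLike 𝕜] {ν μ : Measure G} [SFinite ν] [SFinite μ]
  [μ.IsAddLeftInvariant] [μ.IsNegInvariant] {f g h : G → 𝕜} {A B C : Set G}

lemma integrableOn_differenceShear_preimage (hf : IntegrableOn f A ν) (hg : IntegrableOn g B μ)
    (hh : IntegrableOn h C μ) :
    IntegrableOn (fun p : G × G × G => f p.1 * (g (p.2.2 - p.1) * h (p.2.2 - p.2.1)))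
      (differenceShear G ⁻¹' (A ×ˢ B ×ˢ C)) (ν.prod (μ.prod μ)) := by
  have hprod : IntegrableOn (fun q : G × G × G => f q.1 * (g q.2.1 * h q.2.2)) (A ×ˢ B ×ˢ C)
      (ν.prod (μ.prod μ)) := by
    rw [IntegrableOn, ← Measure.prod_restrict, ← Measure.prod_restrict]
    exact Integrable.mul_prod hf (Integrable.mul_prod hg hh)
  exact ((measurePreserving_differenceShear ν μ).integrableOn_comp_preimage
    (differenceShear G).measurableEmbedding).2 hprod

variable (ν μ f g h A B C) in
lemma setIntegral_differenceShear_preimage :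
    ∫ p in differenceShear G ⁻¹' (A ×ˢ B ×ˢ C),
        f p.1 * (g (p.2.2 - p.1) * h (p.2.2 - p.2.1)) ∂(ν.prod (μ.prod μ))
      = (∫ x in A, f x ∂ν) * ((∫ x in B, g x ∂μ) * ∫ x in C, h x ∂μ) := by
  calc ∫ p in differenceShear G ⁻¹' (A ×ˢ B ×ˢ C),
        f p.1 * (g (p.2.2 - p.1) * h (p.2.2 - p.2.1)) ∂(ν.prod (μ.prod μ))
      = ∫ q in A ×ˢ B ×ˢ C, f q.1 * (g q.2.1 * h q.2.2) ∂(ν.prod (μ.prod μ)) :=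
        (measurePreserving_differenceShear ν μ).setIntegral_preimage_emb
          (differenceShear G).measurableEmbedding (fun q => f q.1 * (g q.2.1 * h q.2.2)) _
    _ = (∫ x in A, f x ∂ν) * ((∫ x in B, g x ∂μ) * ∫ x in C, h x ∂μ) := by
        rw [setIntegral_prod_mul f (fun q : G × G => g q.1 * h q.2), setIntegral_prod_mul]

end Shear

section TruncatedPower

variable {a : ℝ}

lemma min_one_rpow_eqOn_Ioc (ha : a ≤ 0) : EqOn (fun x : ℝ => min 1 (x ^ a)) 1 (Ioc 0 1) :=
  fun _ hx => min_eq_left (one_le_rpow_of_pos_of_le_one_of_nonpos hx.1 hx.2 ha)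

lemma min_one_rpow_eqOn_Ioi (ha : a ≤ 0) :
    EqOn (fun x : ℝ => min 1 (x ^ a)) (fun x => x ^ a) (Ioi 1) :=
  fun _ hx => min_eq_right (rpow_le_one_of_one_le_of_nonpos (le_of_lt hx) ha)

lemma integrableOn_Ioc_min_one_rpow (ha : a ≤ 0) :
    IntegrableOn (fun x : ℝ => min 1 (x ^ a)) (Ioc 0 1) :=
  (integrableOn_const (C := (1 : ℝ)) (by simp)).congr_fun (min_one_rpow_eqOn_Ioc ha).symm
    measurableSet_Ioc

lemma integrableOn_Ioi_one_min_one_rpow (ha : a < -1) :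
    IntegrableOn (fun x : ℝ => min 1 (x ^ a)) (Ioi 1) :=
  (integrableOn_Ioi_rpow_of_lt ha one_pos).congr_fun
    (min_one_rpow_eqOn_Ioi (by linarith)).symm measurableSet_Ioi

lemma integrableOn_Ioi_min_one_rpow (ha : a < -1) :
    IntegrableOn (fun x : ℝ => min 1 (x ^ a)) (Ioi 0) := by
  rw [← Ioc_union_Ioi_eq_Ioi zero_le_one]
  exact (integrableOn_Ioc_min_one_rpow (by linarith)).union (integrableOn_Ioi_one_min_one_rpow ha)

lemma integral_Ioi_min_one_rpow (ha : a < -1) :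
    ∫ x in Ioi (0 : ℝ), min 1 (x ^ a) = a / (a + 1) := by
  have ha₀ : a ≤ 0 := by linarith
  have ha₁ : a + 1 ≠ 0 := by linarith
  calc ∫ x in Ioi (0 : ℝ), min 1 (x ^ a)
      = (∫ x in Ioc (0 : ℝ) 1, min 1 (x ^ a)) + ∫ x in Ioi (1 : ℝ), min 1 (x ^ a) := by
        rw [← Ioc_union_Ioi_eq_Ioi zero_le_one, setIntegral_union Ioc_disjoint_Ioi_same
          measurableSet_Ioi (integrableOn_Ioc_min_one_rpow ha₀)
          (integrableOn_Ioi_one_min_one_rpow ha)]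
    _ = (∫ _ in Ioc (0 : ℝ) 1, (1 : ℝ)) + ∫ x in Ioi (1 : ℝ), x ^ a := by
        congr 1
        · exact setIntegral_congr_fun measurableSet_Ioc (min_one_rpow_eqOn_Ioc ha₀)
        · exact setIntegral_congr_fun measurableSet_Ioi (min_one_rpow_eqOn_Ioi ha₀)
    _ = 1 + -1 / (a + 1) := by
        rw [integral_Ioi_rpow_of_lt ha one_pos, one_rpow]
        simp
    _ = a / (a + 1) := by field_simp; ring

end TruncatedPower

section Simplex

/-- The simplex `0 < r < s < t < T`. -/
def orderedSimplex (T : ℝ) : Set (ℝ × ℝ × ℝ) :=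
  {p | 0 < p.1 ∧ p.1 < p.2.1 ∧ p.2.1 < p.2.2 ∧ p.2.2 < T}

lemma orderedSimplex_subset_differenceShear_preimage (T : ℝ) :
    orderedSimplex T ⊆ differenceShear ℝ ⁻¹' (Ioi 0 ×ˢ Ioi 0 ×ˢ Ioi 0) :=
  fun _ ⟨hr, hrs, hst, _⟩ => ⟨hr, sub_pos.2 (hrs.trans hst), sub_pos.2 hst⟩

lemma setIntegral_orderedSimplex_le {f g h : ℝ → ℝ} (hf : IntegrableOn f (Ioi 0))
    (hg : IntegrableOn g (Ioi 0)) (hh : IntegrableOn h (Ioi 0)) (hf₀ : ∀ x > 0, 0 ≤ f x)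
    (hg₀ : ∀ x > 0, 0 ≤ g x) (hh₀ : ∀ x > 0, 0 ≤ h x) (T : ℝ) :
    ∫ p in orderedSimplex T, f p.1 * (g (p.2.2 - p.1) * h (p.2.2 - p.2.1)) ≤
      (∫ x in Ioi 0, f x) * ((∫ x in Ioi 0, g x) * ∫ x in Ioi 0, h x) := by
  have hmeas : MeasurableSet (differenceShear ℝ ⁻¹' (Ioi 0 ×ˢ Ioi 0 ×ˢ Ioi 0)) :=
    (differenceShear ℝ).measurable (by measurability)
  rw [← setIntegral_differenceShear_preimage]
  refine setIntegral_mono_set (integrableOn_differenceShear_preimage hf hg hh)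
    (ae_restrict_of_forall_mem hmeas ?_)
    (orderedSimplex_subset_differenceShear_preimage T).eventuallyLE
  rintro p ⟨hr, hu, hv⟩
  exact mul_nonneg (hf₀ _ hr) (mul_nonneg (hg₀ _ hu) (hh₀ _ hv))

end Simplex

theorem third_cumulant_uniform_bound_general {a b c : ℝ} (ha : a < -1) (hb : b < -1)
    (hc : c < -1) (T : ℝ) :
    IntegrableOn (fun p : ℝ × ℝ × ℝ => min 1 (p.1 ^ a) * min 1 ((p.2.2 - p.1) ^ b)
        * min 1 ((p.2.2 - p.2.1) ^ c)) (orderedSimplex T) ∧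
      ∫ p in orderedSimplex T, min 1 (p.1 ^ a) * min 1 ((p.2.2 - p.1) ^ b)
        * min 1 ((p.2.2 - p.2.1) ^ c) ≤ a / (a + 1) * (b / (b + 1) * (c / (c + 1))) := by
  have nonneg (d : ℝ) : ∀ x > (0 : ℝ), 0 ≤ min 1 (x ^ d) :=
    fun x hx => le_min zero_le_one (rpow_nonneg (le_of_lt hx) d)
  have hfa := integrableOn_Ioi_min_one_rpow ha
  have hfb := integrableOn_Ioi_min_one_rpow hb
  have hfc := integrableOn_Ioi_min_one_rpow hc
  simp only [mul_assoc, ← integral_Ioi_min_one_rpow ha, ← integral_Ioi_min_one_rpow hb,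
    ← integral_Ioi_min_one_rpow hc]
  exact ⟨(integrableOn_differenceShear_preimage hfa hfb hfc).mono_set
      (orderedSimplex_subset_differenceShear_preimage T),
    setIntegral_orderedSimplex_le hfa hfb hfc (nonneg a) (nonneg b) (nonneg c) T⟩

/-- For `H ∈ (0,1/2)` there is `C > 0` (depending only on `H`, independent of `T`) with
`∫∫∫_{0<r<s<t<T} min(1,r^{2H-2}) min(1,(t-r)^{2H-2}) min(1,(t-s)^{2H-2}) dr ds dt ≤ C`
for every `T > 0`. -/
theorem third_cumulant_uniform_bound (H : ℝ) (hH : H ∈ Set.Ioo (0 : ℝ) (1/2)) :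
    ∃ C : ℝ, 0 < C ∧ ∀ T : ℝ, 0 < T →
      (∫ p in {p : ℝ × ℝ × ℝ | 0 < p.1 ∧ p.1 < p.2.1 ∧ p.2.1 < p.2.2 ∧ p.2.2 < T},
        min 1 (p.1 ^ (2 * H - 2)) * min 1 ((p.2.2 - p.1) ^ (2 * H - 2))
          * min 1 ((p.2.2 - p.2.1) ^ (2 * H - 2))) ≤ C := by
  have ha : 2 * H - 2 < -1 := by linarith [hH.2]
  have hpos : 0 < (2 * H - 2) / (2 * H - 2 + 1) :=
    div_pos_of_neg_of_neg (by linarith) (by linarith)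
  exact ⟨_, by positivity, fun T _ => (third_cumulant_uniform_bound_general ha ha ha T).2⟩
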